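/- Let q > 5, let B be a Baer subplane of PG(2,q²) tangent to ℓ∞ at T̄ = B ∩ ℓ∞, and let C be an F_q-conic contained in B with T̄ ∈ C. Then ℓ∞ is secant to C⁺, say C⁺ ∩ ℓ∞ = {T̄, P̄} with P̄ ≠ T̄, and there is a twisted cubic N of PG(4,q) such that the affine points of N are exactly the φ-images of the points of C ∖ {T̄}, N meets Σ∞ in a single point lying on the spread line [T], and the extension of N to PG(4,q²) contains the point P of g and the point P^q of g^q (so N is a g-special twisted cubic). -/

import Mathlib

open scoped Classical
open Matrix

noncomputable section

namespace BaerConics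

/-- Points of the projective space `PG(n-1, K)` as projectivization of `Fin n → K`. -/
abbrev PP (K : Type) [Field K] (n : ℕ) : Type := Projectivization K (Fin n → K)

variable {K : Type} [Field K] {m n : ℕ}

/-- The (at most one) projective point determined by a vector:  empty if `v = 0`,
and the singleton `{[v]}` otherwise. -/
def projPt (v : Fin n → K) : Set (PP K n) :=
  {p | ∃ h : v ≠ 0, p = Projectivization.mk K v h}

/-- The set of projective points lying in a linear subspace. -/
def ptsOf (W : Submodule K (Fin n → K)) : Set (PP K n) :=
  {p | p.rep ∈ W}

/-- The projective line through two points (as the set of points of the span). -/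
def lineTh (P Q : PP K n) : Set (PP K n) :=
  ptsOf (Submodule.span K {P.rep, Q.rep})

/-- `X` is a projective flat of projective dimension `d`. -/
def IsFlat (d : ℕ) (X : Set (PP K n)) : Prop :=
  ∃ W : Submodule K (Fin n → K), Module.finrank K W = d + 1 ∧ X = ptsOf W

/-- Image of a set of vectors under the projective map induced by a matrix. -/
def mimg (M : Matrix (Fin m) (Fin n) K) (X : Set (Fin n → K)) : Set (PP K m) :=
  {p | ∃ v ∈ X, p ∈ projPt (M.mulVec v)}

/-- Coordinatewise application of a ring homomorphism to a vector. -/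
def mapVec {L : Type} [Field L] (σ : K →+* L) (v : Fin n → K) : Fin n → L :=
  fun i => σ (v i)

lemma mulVec_inj (M : Matrix (Fin n) (Fin n) K) (hM : IsUnit M.det) :
    Function.Injective M.mulVec := by
  intro a b hab
  have h := congrArg (fun v => M⁻¹.mulVec v) hab
  simpa [Matrix.mulVec_mulVec, Matrix.nonsing_inv_mul M hM] using h

/-- The projective transformation induced by an invertible matrix. -/
def pmap (M : Matrix (Fin n) (Fin n) K) (hM : IsUnit M.det) (p : PP K n) : PP K n :=
  Projectivization.mk K (M.mulVec p.rep) (by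
    intro h
    apply p.rep_nonzero
    have h0 : M.mulVec p.rep = M.mulVec 0 := by simpa [Matrix.mulVec_zero] using h
    exact mulVec_inj M hM h0)

/-- The map induced on projective points by the coordinatewise `q`-power map. -/
def frobPt (q : ℕ) (p : PP K n) : PP K n :=
  Projectivization.mk K (fun i => p.rep i ^ q) (by
    obtain ⟨i, hi⟩ := Function.ne_iff.mp p.rep_nonzero
    intro h
    exact pow_ne_zero q (by simpa using hi) (by simpa using congrFun h i))

/-- The line at infinity `z = 0` of `PG(2, K)`. -/
def linf (K : Type) [Field K] : Set (PP K 3) := {p | p.rep 2 = 0}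

/-- Coordinatewise application of the algebra map to a vector. -/
def algVec (F : Type) {K : Type} [Field F] [Field K] [Algebra F K] {n : ℕ}
    (v : Fin n → F) : Fin n → K := fun i => algebraMap F K (v i)

/-- Vectors representing the points of the standard Baer subline of `ℓ∞`. -/
def sublineVecs (F K : Type) [Field F] [Field K] [Algebra F K] : Set (Fin 3 → K) :=
  {v | ∃ θ : F, v = ![algebraMap F K θ, 1, 0]} ∪ {![1, 0, 0]}

/-- Nonzero vectors representing the points of `ℓ∞`. -/
def linfVecs (K : Type) [Field K] : Set (Fin 3 → K) := {v | v ≠ 0 ∧ v 2 = 0}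

/-- Vectors with all coordinates in (the image of) `F`, representing the canonical
Baer subplane. -/
def subplaneVecs (F K : Type) [Field F] [Field K] [Algebra F K] : Set (Fin 3 → K) :=
  {v | ∃ w : Fin 3 → F, w ≠ 0 ∧ v = algVec F w}

/-- Vectors of the standard conic with parameters in `S`. -/
def conicVecs {K : Type} [Field K] (S : Set K) : Set (Fin 3 → K) :=
  {v | ∃ θ ∈ S, v = ![1, θ, θ ^ 2]} ∪ {![0, 0, 1]}

/-- `b` is a Baer subline of the line `ℓ` of `PG(2,q²)`. -/
def IsBaerSublineOf (F : Type) {K : Type} [Field F] [Field K] [Algebra F K]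
    (b ℓ : Set (PP K 3)) : Prop :=
  ∃ M : Matrix (Fin 3) (Fin 3) K, IsUnit M.det ∧
    ℓ = mimg M (linfVecs K) ∧ b = mimg M (sublineVecs F K)

/-- `B` is a Baer subplane of `PG(2,q²)`. -/
def IsBaerSubplane (F : Type) {K : Type} [Field F] [Field K] [Algebra F K]
    (B : Set (PP K 3)) : Prop :=
  ∃ M : Matrix (Fin 3) (Fin 3) K, IsUnit M.det ∧ B = mimg M (subplaneVecs F K)

/-- `C` is the image under `PGL(3,K)` of the standard conic with parameters in `S`. -/
def IsConicOver {K : Type} [Field K] (S : Set K) (C : Set (PP K 3)) : Prop :=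
  ∃ M : Matrix (Fin 3) (Fin 3) K, IsUnit M.det ∧ C = mimg M (conicVecs S)

/-- An `F_q`-conic of `PG(2,q²)`: a nondegenerate conic of a Baer subplane. -/
def IsFqConic (F : Type) {K : Type} [Field F] [Field K] [Algebra F K]
    (C : Set (PP K 3)) : Prop :=
  IsConicOver (Set.range (algebraMap F K)) C

/-- An `F_{q²}`-conic of `PG(2,q²)`: a nondegenerate conic. -/
def IsFq2Conic {K : Type} [Field K] (C : Set (PP K 3)) : Prop :=
  IsConicOver (Set.univ : Set K) C

/-- `𝒦` is an `ℓ∞`-Baer pencil with vertex `P`. -/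
def IsLinfBaerPencil (F : Type) {K : Type} [Field F] [Field K] [Algebra F K]
    (𝒦 : Set (PP K 3)) (P : PP K 3) : Prop :=
  P ∈ linf K ∧ ∃ ℓ b : Set (PP K 3), IsBaerSublineOf F b ℓ ∧ P ∉ ℓ ∧
    (∃! X, X ∈ b ∩ linf K) ∧ 𝒦 = ⋃ X ∈ b, lineTh P X

/-- `m` is a line of the Baer subplane `B`, with extension (full line) `ℓ`. -/
def IsLineOfExt {K : Type} [Field K] (q : ℕ) (B m ℓ : Set (PP K 3)) : Prop :=
  IsFlat 1 ℓ ∧ m = B ∩ ℓ ∧ m.ncard = q + 1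

/-- `m` is a line of the Baer subplane `B`. -/
def IsLineOf {K : Type} [Field K] (q : ℕ) (B m : Set (PP K 3)) : Prop :=
  ∃ ℓ, IsLineOfExt q B m ℓ

/-- `P` and `Q` are conjugate with respect to the Baer subline `b` of `ℓ∞`. -/
def ConjWrtSubline (F : Type) {K : Type} [Field F] [Field K] [Algebra F K]
    (q : ℕ) (b : Set (PP K 3)) (P Q : PP K 3) : Prop :=
  ∃ (M : Matrix (Fin 3) (Fin 3) K) (hM : IsUnit M.det),
    mimg M (linfVecs K) = linf K ∧ b = mimg M (sublineVecs F K) ∧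
    ∃ P₀ : PP K 3, P = pmap M hM P₀ ∧ Q = pmap M hM (frobPt q P₀)

/-- A representative vector for the point `(δ,1,0)` (resp. `(1,0,0)`) of `ℓ∞`. -/
def ptInfVec {K : Type} [Field K] : Option K → Fin 3 → K
  | some δ => ![δ, 1, 0]
  | none => ![1, 0, 0]

lemma ptInfVec_ne {K : Type} [Field K] (t : Option K) : ptInfVec t ≠ 0 := by
  cases t with
  | none => intro h; have h0 := congrFun h 0; simp [ptInfVec] at h0
  | some δ => intro h; have h0 := congrFun h 1; simp [ptInfVec] at h0

/-- The point of `ℓ∞` with parameter `δ ∈ K ∪ {∞}`. -/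
def ptInf {K : Type} [Field K] (t : Option K) : PP K 3 :=
  Projectivization.mk K (ptInfVec t) (ptInfVec_ne t)

/-- The hyperplane at infinity `z = 0` of `PG(4, F)`. -/
def sinf (F : Type) [Field F] : Set (PP F 5) := {p | p.rep 4 = 0}

/-- Affine coordinates of the Bruck-Bose image of an affine point of `PG(2,q²)`. -/
def bbVec {F K : Type} [Field F] [Field K] (c0 c1 : K → F) (p : PP K 3) : Fin 5 → F :=
  ![c0 (p.rep 0 / p.rep 2), c1 (p.rep 0 / p.rep 2),
    c0 (p.rep 1 / p.rep 2), c1 (p.rep 1 / p.rep 2), 1]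

/-- The Bruck-Bose map (meaningful on affine points of `PG(2,q²)`). -/
def bb {F K : Type} [Field F] [Field K] (c0 c1 : K → F) (p : PP K 3) : PP F 5 :=
  Projectivization.mk F (bbVec c0 c1 p) (by
    intro h
    have h4 := congrFun h 4
    simp [bbVec] at h4)

/-- First spanning vector of the spread line with parameter `δ ∈ K ∪ {∞}`. -/
def spreadV1 {F K : Type} [Field F] [Field K] (c0 c1 : K → F) : Option K → Fin 5 → F
  | some δ => ![c0 δ, c1 δ, 1, 0, 0]
  | none => ![1, 0, 0, 0, 0]

/-- Second spanning vector of the spread line with parameter `δ ∈ K ∪ {∞}`. -/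
def spreadV2 {F K : Type} [Field F] [Field K] (c0 c1 : K → F) (t0 t1 : F) :
    Option K → Fin 5 → F
  | some δ => ![t0 * c1 δ, c0 δ + t1 * c1 δ, 0, 1, 0]
  | none => ![0, 1, 0, 0, 0]

/-- The line of the regular spread `S` with parameter `δ ∈ K ∪ {∞}`. -/
def spreadLine {F K : Type} [Field F] [Field K] (c0 c1 : K → F) (t0 t1 : F)
    (t : Option K) : Set (PP F 5) :=
  ptsOf (Submodule.span F {spreadV1 c0 c1 t, spreadV2 c0 c1 t0 t1 t})

/-- The extension `[T]⋆` of a spread line to `PG(4,q²)`. -/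
def extSpreadLine (F : Type) {K : Type} [Field F] [Field K] [Algebra F K]
    (c0 c1 : K → F) (t0 t1 : F) (t : Option K) : Set (PP K 5) :=
  ptsOf (Submodule.span K
    {algVec F (spreadV1 c0 c1 t), algVec F (spreadV2 c0 c1 t0 t1 t)})

/-- The `K`-extension of an `F`-subspace. -/
def extSub (F : Type) {K : Type} [Field F] [Field K] [Algebra F K] {n : ℕ}
    (W : Submodule F (Fin n → F)) : Submodule K (Fin n → K) :=
  Submodule.span K (algVec F '' (W : Set (Fin n → F)))

def A0v {K : Type} [Field K] (τ : K) (q : ℕ) : Fin 5 → K := ![τ ^ q, -1, 0, 0, 0]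
def A1v {K : Type} [Field K] (τ : K) (q : ℕ) : Fin 5 → K := ![0, 0, τ ^ q, -1, 0]
def B0v {K : Type} [Field K] (τ : K) : Fin 5 → K := ![τ, -1, 0, 0, 0]
def B1v {K : Type} [Field K] (τ : K) : Fin 5 → K := ![0, 0, τ, -1, 0]

/-- The transversal line `g` of the regular spread, in `PG(4,q²)`. -/
def gline {K : Type} [Field K] (τ : K) (q : ℕ) : Set (PP K 5) :=
  ptsOf (Submodule.span K {A0v τ q, A1v τ q})

/-- The conjugate transversal line `g^q` of the regular spread, in `PG(4,q²)`. -/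
def gqline {K : Type} [Field K] (τ : K) : Set (PP K 5) :=
  ptsOf (Submodule.span K {B0v τ, B1v τ})

/-- Representative vector of the point `T = δA₀ + A₁` of `g`. -/
def gptVec {K : Type} [Field K] (τ : K) (q : ℕ) : Option K → Fin 5 → K
  | some δ => δ • A0v τ q + A1v τ q
  | none => A0v τ q

/-- Representative vector of the conjugate point `T^q = δ^q A₀^q + A₁^q` of `g^q`. -/
def gqptVec {K : Type} [Field K] (τ : K) (q : ℕ) : Option K → Fin 5 → K
  | some δ => δ ^ q • B0v τ + B1v τ
  | none => B0v τ

lemma gptVec_ne {K : Type} [Field K] (τ : K) (q : ℕ) (t : Option K) :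
    gptVec τ q t ≠ 0 := by
  cases t with
  | none =>
      intro h
      have := congrFun h 1
      simp [gptVec, A0v] at this
  | some δ =>
      intro h
      have := congrFun h 3
      simp [gptVec, A0v, A1v] at this

lemma gqptVec_ne {K : Type} [Field K] (τ : K) (q : ℕ) (t : Option K) :
    gqptVec τ q t ≠ 0 := by
  cases t with
  | none =>
      intro h
      have := congrFun h 1
      simp [gqptVec, B0v] at this
  | some δ =>
      intro h
      have := congrFun h 3
      simp [gqptVec, B0v, B1v] at this

/-- The point of `g` corresponding to the point of `ℓ∞` with parameter `δ ∈ K ∪ {∞}`. -/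
def gpt {K : Type} [Field K] (τ : K) (q : ℕ) (t : Option K) : PP K 5 :=
  Projectivization.mk K (gptVec τ q t) (gptVec_ne τ q t)

/-- The point of `g^q` conjugate to `gpt τ q t`. -/
def gqpt {K : Type} [Field K] (τ : K) (q : ℕ) (t : Option K) : PP K 5 :=
  Projectivization.mk K (gqptVec τ q t) (gqptVec_ne τ q t)

/-- Evaluation of the quadratic form with matrix `M` at `v`. -/
def qeval {K : Type} [Field K] {n : ℕ} (M : Matrix (Fin n) (Fin n) K) (v : Fin n → K) : K :=
  v ⬝ᵥ M.mulVec v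

/-- Vectors of the standard twisted cubic (inside the hyperplane `x₄ = 0`)
with parameters in `S`. -/
def tcVecs {K : Type} [Field K] (S : Set K) : Set (Fin 5 → K) :=
  {v | ∃ θ ∈ S, v = ![1, θ, θ ^ 2, θ ^ 3, 0]} ∪ {![0, 0, 0, 1, 0]}

/-- Vectors of the standard 4-dimensional normal rational curve with parameters in `S`. -/
def nrcVecs {K : Type} [Field K] (S : Set K) : Set (Fin 5 → K) :=
  {v | ∃ θ ∈ S, v = ![1, θ, θ ^ 2, θ ^ 3, θ ^ 4]} ∪ {![0, 0, 0, 0, 1]}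

/-- `R` is a regulus of `Σ∞` in `PG(4,q)`. -/
def IsRegulus {F : Type} [Field F] (q : ℕ) (R : Set (Set (PP F 5))) : Prop :=
  R.ncard = q + 1 ∧
  (∀ ℓ ∈ R, IsFlat 1 ℓ ∧ ℓ ⊆ sinf F) ∧
  (∀ ℓ ∈ R, ∀ ℓ' ∈ R, ℓ ≠ ℓ' → ℓ ∩ ℓ' = ∅) ∧
  (∀ mℓ : Set (PP F 5), IsFlat 1 mℓ → mℓ ⊆ sinf F →
    (∃ ℓ₁ ∈ R, ∃ ℓ₂ ∈ R, ∃ ℓ₃ ∈ R, ℓ₁ ≠ ℓ₂ ∧ ℓ₁ ≠ ℓ₃ ∧ ℓ₂ ≠ ℓ₃ ∧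
      (mℓ ∩ ℓ₁).Nonempty ∧ (mℓ ∩ ℓ₂).Nonempty ∧ (mℓ ∩ ℓ₃).Nonempty) →
    ∀ ℓ ∈ R, (mℓ ∩ ℓ).Nonempty)


lemma mk_eq {K : Type} [Field K] {n : ℕ} {v w : Fin n → K} (hv : v ≠ 0) (hw : w ≠ 0)
    (c : K) (h : c • w = v) : Projectivization.mk K v hv = Projectivization.mk K w hw :=
  (Projectivization.mk_eq_mk_iff' K v w hv hw).2 ⟨c, h⟩

lemma rep_mk {K : Type} [Field K] {n : ℕ} (v : Fin n → K) (hv : v ≠ 0) :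
    ∃ a : K, a ≠ 0 ∧ (Projectivization.mk K v hv).rep = a • v := by
  obtain ⟨a, ha⟩ := Projectivization.exists_smul_eq_mk_rep K v hv
  exact ⟨a, a.ne_zero, ha.symm⟩

lemma mk_mem_linf {K : Type} [Field K] (v : Fin 3 → K) (hv : v ≠ 0) :
    Projectivization.mk K v hv ∈ linf K ↔ v 2 = 0 := by
  obtain ⟨a, ha, h⟩ := rep_mk v hv
  simp [linf, h, ha]

lemma mk_mem_sinf {K : Type} [Field K] (v : Fin 5 → K) (hv : v ≠ 0) :
    Projectivization.mk K v hv ∈ sinf K ↔ v 4 = 0 := by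
  obtain ⟨a, ha, h⟩ := rep_mk v hv
  simp [sinf, h, ha]

lemma mk_mem_ptsOf {K : Type} [Field K] {n : ℕ} (W : Submodule K (Fin n → K))
    (v : Fin n → K) (hv : v ≠ 0) (h : v ∈ W) :
    Projectivization.mk K v hv ∈ ptsOf W := by
  obtain ⟨a, ha, h'⟩ := rep_mk v hv
  simp only [ptsOf, Set.mem_ofPred_eq, h']
  exact W.smul_mem a h

lemma mulVec_ne {K : Type} [Field K] {n : ℕ} {M : Matrix (Fin n) (Fin n) K}
    (hM : IsUnit M.det) {v : Fin n → K} (hv : v ≠ 0) : M.mulVec v ≠ 0 := by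
  intro h
  exact hv (mulVec_inj M hM (by simpa using h))

lemma mk_mem_mimg {K : Type} [Field K] {n : ℕ} (M : Matrix (Fin n) (Fin n) K)
    (hM : IsUnit M.det) (X : Set (Fin n → K)) (w : Fin n → K) (hw : w ≠ 0)
    (v : Fin n → K) (hv : v ∈ X) (c : K) (hc : c ≠ 0) (h : M.mulVec v = c • w) :
    Projectivization.mk K w hw ∈ mimg M X := by
  have h0 : M.mulVec v ≠ 0 := by rw [h]; exact smul_ne_zero hc hw
  refine ⟨v, hv, h0, (mk_eq hw h0 c⁻¹ ?_)⟩
  rw [h, smul_smul, inv_mul_cancel₀ hc, one_smul]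

lemma mimg_smul {K : Type} [Field K] {n : ℕ} (M : Matrix (Fin n) (Fin n) K)
    (X : Set (Fin n → K)) (c : K) (hc : c ≠ 0) : mimg (c • M) X = mimg M X := by
  ext p
  constructor
  · rintro ⟨v, hv, h0, rfl⟩
    have h1 : M.mulVec v ≠ 0 := by
      intro h; apply h0; rw [Matrix.smul_mulVec, h, smul_zero]
    exact ⟨v, hv, h1, mk_eq _ _ c (by rw [Matrix.smul_mulVec])⟩
  · rintro ⟨v, hv, h0, rfl⟩
    have h1 : (c • M).mulVec v ≠ 0 := by
      rw [Matrix.smul_mulVec]; exact smul_ne_zero hc h0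
    refine ⟨v, hv, h1, (mk_eq _ _ c ?_).symm⟩
    rw [Matrix.smul_mulVec]

lemma mulVec3 {K : Type} [Field K] (M : Matrix (Fin 3) (Fin 3) K) (a b c : K) (i : Fin 3) :
    M.mulVec ![a, b, c] i = M i 0 * a + M i 1 * b + M i 2 * c := by
  simp [Matrix.mulVec, dotProduct, Fin.sum_univ_three]

lemma conic_ne {K : Type} [Field K] {S : Set K} {v : Fin 3 → K} (hv : v ∈ conicVecs S) :
    v ≠ 0 := by
  rintro rfl
  rcases hv with ⟨θ, -, h⟩ | h
  · have := congrFun h 0; simp at this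
  · have := congrFun h 2; simp at this

/-- reparametrisation of a conic -/
lemma reparam {F K : Type} [Field F] [Field K] [Algebra F K]
    (M : Matrix (Fin 3) (Fin 3) K) (hM : IsUnit M.det) (t : F) :
    ∃ M' : Matrix (Fin 3) (Fin 3) K, IsUnit M'.det ∧
      mimg M' (conicVecs (Set.range (algebraMap F K)))
        = mimg M (conicVecs (Set.range (algebraMap F K))) ∧
      M'.mulVec ![0, 0, 1] = M.mulVec ![1, algebraMap F K t, (algebraMap F K t) ^ 2] := by
  set s := algebraMap F K t with hs
  let R : Matrix (Fin 3) (Fin 3) K := !![0, 0, 1; 0, 1, s; 1, 2 * s, s ^ 2]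
  have hR : IsUnit R.det := by
    have : R.det = -1 := by simp [R, Matrix.det_fin_three]
    rw [this]; exact isUnit_one.neg
  have hMR : IsUnit (M * R).det := by rw [Matrix.det_mul]; exact hM.mul hR
  have hRe : R.mulVec ![0, 0, 1] = ![1, s, s ^ 2] := by
    ext i; rw [mulVec3]; fin_cases i <;> simp [R]
  have hR0 : R.mulVec ![1, 0, 0] = ![0, 0, 1] := by
    ext i; rw [mulVec3]; fin_cases i <;> simp [R]
  have hRu : ∀ u : K, R.mulVec ![1, u, u ^ 2] = ![u ^ 2, u * (s * u + 1), (s * u + 1) ^ 2] := by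
    intro u; ext i; rw [mulVec3]; fin_cases i <;> simp [R] <;> ring
  refine ⟨M * R, hMR, ?_, by rw [← Matrix.mulVec_mulVec, hRe]⟩
  ext p
  constructor
  · rintro ⟨v, hv, h0, rfl⟩
    rcases hv with ⟨θ, ⟨u, rfl⟩, rfl⟩ | hv
    · by_cases hu : algebraMap F K u = 0
      · refine mk_mem_mimg M hM _ _ _ ![0, 0, 1] (Or.inr rfl) 1 one_ne_zero ?_
        rw [← Matrix.mulVec_mulVec, hu, one_smul]
        simp only [ne_eq, OfNat.ofNat_ne_zero, not_false_eq_true, zero_pow, hR0]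
      · refine mk_mem_mimg M hM _ _ _
          ![1, algebraMap F K (t + u⁻¹), algebraMap F K (t + u⁻¹) ^ 2]
          (Or.inl ⟨_, ⟨_, rfl⟩, rfl⟩) ((algebraMap F K u) ^ 2)⁻¹ (by simp_all) ?_
        rw [← Matrix.mulVec_mulVec, hRu, ← Matrix.mulVec_smul]
        congr 1
        ext i; fin_cases i <;> simp <;> field_simp <;> simp [← hs] <;> field_simp
    · rw [Set.mem_singleton_iff] at hv; subst hv
      refine mk_mem_mimg M hM _ _ _ ![1, s, s ^ 2] (Or.inl ⟨_, ⟨t, rfl⟩, rfl⟩) 1 one_ne_zero ?_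
      rw [← Matrix.mulVec_mulVec, hRe, one_smul]
  · rintro ⟨v, hv, h0, rfl⟩
    rcases hv with ⟨θ, ⟨u, rfl⟩, rfl⟩ | hv
    · by_cases hu : u = t
      · subst hu
        refine mk_mem_mimg _ hMR _ _ _ ![0, 0, 1] (Or.inr rfl) 1 one_ne_zero ?_
        rw [← Matrix.mulVec_mulVec, hRe, one_smul]
      · have hd : algebraMap F K u - s ≠ 0 := by
          rw [hs, ← map_sub]; simpa [sub_eq_zero] using hu
        refine mk_mem_mimg _ hMR _ _ _
          ![1, algebraMap F K (u - t)⁻¹, algebraMap F K (u - t)⁻¹ ^ 2]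
          (Or.inl ⟨_, ⟨_, rfl⟩, rfl⟩) ((algebraMap F K u - s) ^ 2)⁻¹ (by simpa using hd) ?_
        rw [← Matrix.mulVec_mulVec, hRu, ← Matrix.mulVec_smul]
        congr 1
        ext i; fin_cases i <;> simp [← hs] <;> field_simp <;> ring
    · rw [Set.mem_singleton_iff] at hv; subst hv
      refine mk_mem_mimg _ hMR _ _ _ ![1, 0, 0] (Or.inl ⟨0, ⟨0, by simp⟩, by simp⟩) 1
        one_ne_zero ?_
      rw [← Matrix.mulVec_mulVec, hR0, one_smul]

lemma extend_cols {F : Type} [Field F] (Q : Matrix (Fin 5) (Fin 4) F)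
    (hQ : ∀ u, Q.mulVec u = 0 → u = 0) :
    ∃ M5 : Matrix (Fin 5) (Fin 5) F, IsUnit M5.det ∧
      ∀ i (j : Fin 4), M5 i j.castSucc = Q i j := by
  have hli : LinearIndependent F Q.col := by
    rw [← Matrix.mulVec_injective_iff]
    intro a b hab
    have := hQ (a - b) (by rw [Matrix.mulVec_sub]; simpa [sub_eq_zero] using hab)
    exact sub_eq_zero.1 this
  have : ∃ x : Fin 5 → F, x ∉ Submodule.span F (Set.range Q.col) := by
    by_contra! h
    have h1 : Submodule.span F (Set.range Q.col) = ⊤ := by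
      rw [eq_top_iff]; intro x _; exact h x
    have h2 := finrank_span_eq_card hli
    rw [h1] at h2
    simp at h2
  obtain ⟨x, hx⟩ := this
  have h3 : LinearIndependent F (Fin.snoc Q.col x : Fin 5 → (Fin 5 → F)) :=
    linearIndependent_finSnoc.2 ⟨hli, hx⟩
  refine ⟨Matrix.of fun i j => (Fin.snoc Q.col x : Fin 5 → (Fin 5 → F)) j i, ?_, ?_⟩
  · rw [← Matrix.isUnit_iff_isUnit_det, ← Matrix.linearIndependent_cols_iff_isUnit]
    exact h3
  · intro i j
    simp only [Matrix.of_apply]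
    rw [Fin.snoc_castSucc]
    rfl

lemma mulVec3' {K : Type} [Field K] (M : Matrix (Fin 3) (Fin 3) K) (v : Fin 3 → K) (i : Fin 3) :
    M.mulVec v i = M i 0 * v 0 + M i 1 * v 1 + M i 2 * v 2 := by
  simp [Matrix.mulVec, dotProduct, Fin.sum_univ_three]

lemma quartic_zero {F K : Type} [Field F] [Field K] [Fintype F] [Algebra F K]
    (hq5 : 5 < Fintype.card F) (k0 k1 k2 k3 k4 : K)
    (h : ∀ t : F, k0 + k1 * algebraMap F K t + k2 * algebraMap F K t ^ 2
      + k3 * algebraMap F K t ^ 3 + k4 * algebraMap F K t ^ 4 = 0) :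
    k0 = 0 ∧ k1 = 0 ∧ k2 = 0 ∧ k3 = 0 ∧ k4 = 0 := by
  let p : Polynomial K := Polynomial.C k4 * Polynomial.X ^ 4 + Polynomial.C k3 * Polynomial.X ^ 3
    + Polynomial.C k2 * Polynomial.X ^ 2 + Polynomial.C k1 * Polynomial.X + Polynomial.C k0
  have hp : p = 0 := by
    refine Polynomial.eq_zero_of_natDegree_lt_card_of_eval_eq_zero p
      (f := algebraMap F K) (algebraMap F K).injective ?_ ?_
    · intro t; simp only [p, Polynomial.eval_add, Polynomial.eval_mul, Polynomial.eval_C,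
        Polynomial.eval_pow, Polynomial.eval_X]
      rw [← h t]; ring
    · have : p.natDegree ≤ 4 := by simp only [p]; compute_degree
      omega
  refine ⟨?_, ?_, ?_, ?_, ?_⟩
  · have := congrArg (fun r => Polynomial.coeff r 0) hp
    simpa [p, Polynomial.coeff_X, Polynomial.coeff_C, Polynomial.coeff_X_pow] using this
  · have := congrArg (fun r => Polynomial.coeff r 1) hp
    simpa [p, Polynomial.coeff_X, Polynomial.coeff_C, Polynomial.coeff_X_pow] using this
  · have := congrArg (fun r => Polynomial.coeff r 2) hp
    simpa [p, Polynomial.coeff_X, Polynomial.coeff_C, Polynomial.coeff_X_pow] using this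
  · have := congrArg (fun r => Polynomial.coeff r 3) hp
    simpa [p, Polynomial.coeff_X, Polynomial.coeff_C, Polynomial.coeff_X_pow] using this
  · have := congrArg (fun r => Polynomial.coeff r 4) hp
    simpa [p, Polynomial.coeff_X, Polynomial.coeff_C, Polynomial.coeff_X_pow] using this

lemma mem_conic_iff {K : Type} [Field K] (M : Matrix (Fin 3) (Fin 3) K) (hM : IsUnit M.det)
    (v : Fin 3 → K) (hv : M.mulVec v ≠ 0) :
    Projectivization.mk K (M.mulVec v) hv ∈ mimg M (conicVecs (Set.univ : Set K)) ↔
      v 1 ^ 2 = v 0 * v 2 := by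
  constructor
  · rintro ⟨w, hw, h0, h⟩
    obtain ⟨c, hc⟩ := (Projectivization.mk_eq_mk_iff' K _ _ _ _).1 h
    rw [← Matrix.mulVec_smul] at hc
    have := mulVec_inj M hM hc
    subst this
    rcases hw with ⟨θ, -, rfl⟩ | hw
    · simp; ring
    · rw [Set.mem_singleton_iff] at hw; subst hw; simp
  · intro h
    have hv0 : v ≠ 0 := by rintro rfl; simp at hv
    by_cases h0 : v 0 = 0
    · have h1 : v 1 = 0 := by simpa [h0] using h
      have h2 : v 2 ≠ 0 := by
        intro h2; apply hv0; ext i; fin_cases i <;> simp [h0, h1, h2]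
      refine mk_mem_mimg M hM _ _ _ ![0, 0, 1] (Or.inr rfl) (v 2)⁻¹ (by simpa using h2) ?_
      rw [← Matrix.mulVec_smul]
      congr 1
      ext i; fin_cases i <;> simp [h0, h1, h2]
    · refine mk_mem_mimg M hM _ _ _ ![1, v 1 / v 0, (v 1 / v 0) ^ 2]
        (Or.inl ⟨_, trivial, rfl⟩) (v 0)⁻¹ (by simpa using h0) ?_
      rw [← Matrix.mulVec_smul]
      congr 1
      ext i; fin_cases i <;> simp [h0]
      · field_simp
      · field_simp; rw [h]

lemma mk_congr {K : Type} [Field K] {n : ℕ} {v w : Fin n → K} (hv : v ≠ 0) (h : v = w) :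
    Projectivization.mk K v hv = Projectivization.mk K w (h ▸ hv) := by
  subst h; rfl

lemma conic_unique {F K : Type} [Field F] [Field K] [Fintype F] [Algebra F K]
    (hq5 : 5 < Fintype.card F) (M N : Matrix (Fin 3) (Fin 3) K) (hM : IsUnit M.det)
    (hN : IsUnit N.det)
    (hsub : mimg M (conicVecs (Set.range (algebraMap F K))) ⊆ mimg N (conicVecs Set.univ)) :
    mimg N (conicVecs Set.univ) = mimg M (conicVecs Set.univ) := by
  obtain ⟨A, hA, hAu⟩ : ∃ A : Matrix (Fin 3) (Fin 3) K, M = N * A ∧ IsUnit A.det := by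
    refine ⟨N⁻¹ * M, by rw [Matrix.mul_nonsing_inv_cancel_left _ _ hN], ?_⟩
    rw [Matrix.det_mul]
    exact (Matrix.isUnit_nonsing_inv_det N hN).mul hM
  have hMA : ∀ v, M.mulVec v = N.mulVec (A.mulVec v) := by
    intro v; rw [hA, Matrix.mulVec_mulVec]
  have key : ∀ v ∈ conicVecs (Set.range (algebraMap F K)),
      A.mulVec v 1 ^ 2 = A.mulVec v 0 * A.mulVec v 2 := by
    intro v hv
    have h0 : M.mulVec v ≠ 0 := mulVec_ne hM (conic_ne hv)
    have h1 := hsub ⟨v, hv, h0, rfl⟩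
    rw [mk_congr h0 (hMA v)] at h1
    exact (mem_conic_iff N hN _ _).1 h1
  obtain ⟨k0, k1, k2, k3, k4⟩ := quartic_zero (F := F) hq5
    (A 1 0 ^ 2 - A 0 0 * A 2 0)
    (2 * A 1 0 * A 1 1 - A 0 0 * A 2 1 - A 0 1 * A 2 0)
    (A 1 1 ^ 2 + 2 * A 1 0 * A 1 2 - A 0 0 * A 2 2 - A 0 2 * A 2 0 - A 0 1 * A 2 1)
    (2 * A 1 1 * A 1 2 - A 0 1 * A 2 2 - A 0 2 * A 2 1)
    (A 1 2 ^ 2 - A 0 2 * A 2 2) (by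
      intro t
      have := key ![1, algebraMap F K t, algebraMap F K t ^ 2] (Or.inl ⟨_, ⟨t, rfl⟩, rfl⟩)
      simp only [mulVec3] at this
      linear_combination this)
  obtain ⟨β, hβ⟩ : ∃ β, β = A 1 1 ^ 2 - A 0 1 * A 2 1 := ⟨_, rfl⟩
  have form : ∀ v : Fin 3 → K, A.mulVec v 1 ^ 2 - A.mulVec v 0 * A.mulVec v 2
      = β * (v 1 ^ 2 - v 0 * v 2) := by
    intro v
    rw [mulVec3', mulVec3', mulVec3', hβ]
    linear_combination (v 0) ^ 2 * k0 + v 0 * v 1 * k1 + v 0 * v 2 * k2 + v 1 * v 2 * k3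
      + (v 2) ^ 2 * k4
  have hβ0 : β ≠ 0 := by
    intro h
    have := form (A⁻¹.mulVec ![0, 1, 0])
    rw [Matrix.mulVec_mulVec, Matrix.mul_nonsing_inv _ hAu, Matrix.one_mulVec, h] at this
    simp at this
  ext p
  induction p using Projectivization.ind with
  | h w hw =>
    obtain ⟨v, rfl⟩ : ∃ v, M.mulVec v = w :=
      ⟨M⁻¹.mulVec w, by rw [Matrix.mulVec_mulVec, Matrix.mul_nonsing_inv _ hM, Matrix.one_mulVec]⟩
    rw [mem_conic_iff M hM, mk_congr hw (hMA v), mem_conic_iff N hN, ← sub_eq_zero, form,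
      mul_eq_zero, sub_eq_zero]
    simp [hβ0]

lemma algVec_mulVec {F K : Type} [Field F] [Field K] [Algebra F K] {m n : ℕ}
    (W : Matrix (Fin m) (Fin n) F) (v : Fin n → F) :
    (W.map (algebraMap F K)).mulVec (algVec F v) = algVec F (W.mulVec v) := by
  ext i
  simp [Matrix.mulVec, dotProduct, algVec]

/-- the fourth point of the frame -/
lemma mid_mem {F K : Type} [Field F] [Field K] [Fintype F] [Algebra F K]
    (hq5 : 5 < Fintype.card F) (M N : Matrix (Fin 3) (Fin 3) K) (hM : IsUnit M.det)
    (hN : IsUnit N.det)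
    (hsub : mimg M (conicVecs (Set.range (algebraMap F K))) ⊆ mimg N (subplaneVecs F K))
    (h0 : M.mulVec ![0, 1, 0] ≠ 0) :
    Projectivization.mk K (M.mulVec ![0, 1, 0]) h0 ∈ mimg N (subplaneVecs F K) := by
  obtain ⟨A, hA, hAu⟩ : ∃ A : Matrix (Fin 3) (Fin 3) K, M = N * A ∧ IsUnit A.det := by
    refine ⟨N⁻¹ * M, by rw [Matrix.mul_nonsing_inv_cancel_left _ _ hN], ?_⟩
    rw [Matrix.det_mul]
    exact (Matrix.isUnit_nonsing_inv_det N hN).mul hM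
  have hMA : ∀ v, M.mulVec v = N.mulVec (A.mulVec v) := by
    intro v; rw [hA, Matrix.mulVec_mulVec]
  have key : ∀ v ∈ conicVecs (Set.range (algebraMap F K)),
      ∃ (l : K) (w : Fin 3 → F), l ≠ 0 ∧ A.mulVec v = l • algVec F w := by
    intro v hv
    have h0 : M.mulVec v ≠ 0 := mulVec_ne hM (conic_ne hv)
    obtain ⟨u, ⟨w, hw, rfl⟩, hu, h⟩ := hsub ⟨v, hv, h0, rfl⟩
    obtain ⟨c, hc⟩ := (Projectivization.mk_eq_mk_iff' K _ _ _ _).1 h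
    have hc0 : c ≠ 0 := by rintro rfl; rw [zero_smul] at hc; exact h0 hc.symm
    rw [← Matrix.mulVec_smul, hMA] at hc
    exact ⟨c, w, hc0, (mulVec_inj N hN hc).symm⟩
  obtain ⟨t, ht⟩ : ∃ t : F, t ∉ ({0, 1} : Finset F) := by
    by_contra! h
    have h1 : (Finset.univ : Finset F) ⊆ {0, 1} := fun x _ => h x
    have h2 := Finset.card_le_card h1
    have h3 : ({0, 1} : Finset F).card ≤ 2 := Finset.card_le_two
    rw [Finset.card_univ] at h2
    omega
  simp only [Finset.mem_insert, Finset.mem_singleton, not_or] at ht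
  set s := algebraMap F K t with hs
  have hs0 : s ≠ 0 := by simpa [hs] using ht.1
  have hs1 : s - 1 ≠ 0 := by
    rw [sub_ne_zero, hs, ← map_one (algebraMap F K)]
    exact fun h => ht.2 ((algebraMap F K).injective h)
  obtain ⟨l0, w0, hl0, e0⟩ := key ![1, 0, 0] (Or.inl ⟨0, ⟨0, by simp⟩, by simp⟩)
  obtain ⟨l1, w1, hl1, e1⟩ := key ![1, 1, 1] (Or.inl ⟨1, ⟨1, by simp⟩, by simp⟩)
  obtain ⟨l2, w2, hl2, e2⟩ := key ![0, 0, 1] (Or.inr rfl)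
  obtain ⟨l3, w3, hl3, e3⟩ := key ![1, s, s ^ 2] (Or.inl ⟨s, ⟨t, rfl⟩, rfl⟩)
  let W : Matrix (Fin 3) (Fin 3) F := Matrix.of fun i j => ![w0, w1, w2] j i
  have E0 : ∀ i, A i 0 = l0 * algebraMap F K (w0 i) := by
    intro i; have := congrFun e0 i; rw [mulVec3] at this; simpa [algVec] using this
  have E2 : ∀ i, A i 2 = l2 * algebraMap F K (w2 i) := by
    intro i; have := congrFun e2 i; rw [mulVec3] at this; simpa [algVec] using this
  have E1 : ∀ i, A i 1 = l1 * algebraMap F K (w1 i) - l0 * algebraMap F K (w0 i)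
      - l2 * algebraMap F K (w2 i) := by
    intro i; have := congrFun e1 i; rw [mulVec3] at this
    simp only [algVec, Pi.smul_apply, smul_eq_mul] at this
    linear_combination this - E0 i - E2 i
  have hdet : A.det = l0 * l1 * l2 * (W.map (algebraMap F K)).det := by
    simp only [Matrix.det_fin_three, E0, E1, E2, W, Matrix.map_apply, Matrix.of_apply,
      Matrix.cons_val]
    ring
  have hWK : IsUnit (W.map (algebraMap F K)).det := by
    rw [isUnit_iff_ne_zero]; intro h
    rw [h, mul_zero] at hdet
    exact hAu.ne_zero hdet
  have hW : IsUnit W.det := by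
    rw [isUnit_iff_ne_zero]; intro h
    have h2 := RingHom.map_det (algebraMap F K) W
    rw [h, map_zero] at h2
    exact hWK.ne_zero h2.symm
  obtain ⟨a, ha⟩ : ∃ a, W.mulVec a = w3 :=
    ⟨W⁻¹.mulVec w3, by rw [Matrix.mulVec_mulVec, Matrix.mul_nonsing_inv _ hW, Matrix.one_mulVec]⟩
  have hvec : (![(1 - s) * l0, s * l1, (s ^ 2 - s) * l2] : Fin 3 → K) = l3 • algVec F a := by
    apply mulVec_inj _ hWK
    rw [Matrix.mulVec_smul, algVec_mulVec, ha, ← e3]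
    ext i
    rw [mulVec3, mulVec3, E0, E1, E2]
    simp only [W, Matrix.map_apply, Matrix.of_apply, Matrix.cons_val]
    ring
  have a0 : (1 - s) * l0 = l3 * algebraMap F K (a 0) := by
    have := congrFun hvec 0; simpa [algVec] using this
  have a1 : s * l1 = l3 * algebraMap F K (a 1) := by
    have := congrFun hvec 1; simpa [algVec] using this
  have a2 : (s ^ 2 - s) * l2 = l3 * algebraMap F K (a 2) := by
    have := congrFun hvec 2; simpa [algVec] using this
  have key2 : A.mulVec ![0, 1, 0] = (l3 / (s * (s - 1))) • algVec F
      ((a 1 * (t - 1)) • w1 + (a 0 * t) • w0 - (a 2) • w2) := by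
    ext i
    rw [mulVec3, E0, E1, E2]
    simp only [algVec, Pi.smul_apply, Pi.add_apply, Pi.sub_apply, smul_eq_mul, map_add, map_sub,
      map_mul, map_one, ← hs]
    field_simp
    linear_combination (s - 1) * algebraMap F K (w1 i) * a1 + s * algebraMap F K (w0 i) * a0
      - algebraMap F K (w2 i) * a2
  have hA0 : A.mulVec ![0, 1, 0] ≠ 0 := by
    intro h; apply h0; rw [hMA, h, Matrix.mulVec_zero]
  refine mk_mem_mimg N hN _ _ _ _
    ⟨((a 1 * (t - 1)) • w1 + (a 0 * t) • w0 - (a 2) • w2), ?_, rfl⟩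
    (l3 / (s * (s - 1)))⁻¹ ?_ ?_
  · intro h
    rw [h] at key2
    apply hA0; rw [key2]; ext i; simp [algVec]
  · simp [hl3, hs0, hs1]
  · rw [hMA, key2, Matrix.mulVec_smul, smul_smul, inv_mul_cancel₀, one_smul]
    simp [hl3, hs0, hs1]

lemma frob_facts {F K : Type} [Field F] [Field K] [Fintype F] [Fintype K] [Algebra F K]
    (q : ℕ) (hq : Fintype.card F = q) (hK : Fintype.card K = q ^ 2)
    (τ : K) (t0 t1 : F)
    (hτ : τ ^ 2 = algebraMap F K t1 * τ + algebraMap F K t0)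
    (c0 c1 : K → F)
    (hc : ∀ x : K, x = algebraMap F K (c0 x) + algebraMap F K (c1 x) * τ)
    (hq5 : 5 < q) :
    ∃ σ : K →ₐ[F] K, (∀ x, σ x = x ^ q) ∧ σ τ = algebraMap F K t1 - τ ∧ σ τ ≠ τ := by
  subst hq
  refine ⟨FiniteField.frobeniusAlgHom F K, fun x => rfl, ?_⟩
  set σ := FiniteField.frobeniusAlgHom F K with hσ
  have hne : σ τ ≠ τ := by
    intro h
    have hid : ∀ x : K, x ^ (Fintype.card F) = x := by
      intro x
      change σ x = x
      conv_lhs => rw [hc x]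
      conv_rhs => rw [hc x]
      simp [h]
    have h1 : ∀ x : Kˣ, x ^ (Fintype.card F - 1) = 1 := by
      intro x
      have h2 := hid x
      have h3 : (x : K) ^ (Fintype.card F - 1) * x = 1 * x := by
        rw [← pow_succ, Nat.sub_add_cancel (by omega), h2, one_mul]
      exact Units.ext (by simpa using mul_right_cancel₀ x.ne_zero h3)
    have h2 := (FiniteField.forall_pow_eq_one_iff K _).1 h1
    have h3 := Nat.le_of_dvd (by omega) h2
    rw [hK] at h3
    have : 6 * Fintype.card F ≤ Fintype.card F ^ 2 := by nlinarith
    omega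
  refine ⟨?_, hne⟩
  have h1 : (σ τ) ^ 2 = algebraMap F K t1 * σ τ + algebraMap F K t0 := by
    rw [← map_pow, hτ]; simp
  have h2 : (σ τ - τ) * (σ τ - (algebraMap F K t1 - τ)) = 0 := by
    linear_combination h1 - hτ
  rcases mul_eq_zero.1 h2 with h | h
  · exact absurd (sub_eq_zero.1 h) hne
  · exact sub_eq_zero.1 h

lemma coord_unique {F K : Type} [Field F] [Field K] [Algebra F K]
    (τ : K) (hτF : τ ∉ Set.range (algebraMap F K))
    (a b a' b' : F)
    (h : algebraMap F K a + algebraMap F K b * τ = algebraMap F K a' + algebraMap F K b' * τ) :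
    a = a' ∧ b = b' := by
  by_cases hb : b = b'
  · subst hb
    exact ⟨(algebraMap F K).injective (by linear_combination h), rfl⟩
  · exfalso
    apply hτF
    have hb' : algebraMap F K (b - b') ≠ 0 := by simpa [sub_eq_zero] using hb
    refine ⟨(a' - a) / (b - b'), ?_⟩
    rw [map_div₀, div_eq_iff hb', map_sub, map_sub]
    linear_combination -h

lemma mulVec5 {K : Type} [Field K] (M : Matrix (Fin 5) (Fin 5) K) (a b c d : K) (i : Fin 5) :
    M.mulVec ![a, b, c, d, 0] i = M i 0 * a + M i 1 * b + M i 2 * c + M i 3 * d := by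
  simp [Matrix.mulVec, dotProduct, Fin.sum_univ_five]

/-- coefficients of `(m₀ + m₁ X + m₂ X²)(X - r)` -/
def cub {K : Type} [Field K] (r : K) (m : Fin 3 → K) : Fin 4 → K :=
  ![-(r * m 0), m 0 - r * m 1, m 1 - r * m 2, m 2]

lemma core {F K : Type} [Field F] [Field K] [Algebra F K]
    (τ : K)
    (hτF : τ ∉ Set.range (algebraMap F K))
    (c0 c1 : K → F)
    (hc : ∀ x : K, x = algebraMap F K (c0 x) + algebraMap F K (c1 x) * τ)
    (σ : K →ₐ[F] K) (t1 : F) (hσt : σ τ = algebraMap F K t1 - τ) (hστ : σ τ ≠ τ)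
    (t0 : F) (hτ : τ ^ 2 = algebraMap F K t1 * τ + algebraMap F K t0)
    (M : Matrix (Fin 3) (Fin 3) K) (hM : IsUnit M.det) (ρ : K)
    (hρ : ρ ∉ Set.range (algebraMap F K))
    (m0 : M 2 0 = -ρ) (m1 : M 2 1 = 1) (m2 : M 2 2 = 0) :
    ∃ M5 : Matrix (Fin 5) (Fin 5) F, IsUnit M5.det ∧
      (∀ (θ : F) (h0 : M.mulVec ![1, algebraMap F K θ, algebraMap F K θ ^ 2] ≠ 0),
        ∃ n : F, n ≠ 0 ∧ M5.mulVec ![1, θ, θ ^ 2, θ ^ 3, 0]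
          = n • bbVec c0 c1 (Projectivization.mk K _ h0)) ∧
      M5.mulVec ![0, 0, 0, 1, 0] =
        ![c0 (M 0 2), c1 (M 0 2), c0 (M 1 2), c1 (M 1 2), 0] ∧
      (∃ k : K, k ≠ 0 ∧ (M5.map (algebraMap F K)).mulVec ![1, ρ, ρ ^ 2, ρ ^ 3, 0]
        = k • (M.mulVec ![1, ρ, ρ ^ 2] 0 • ![σ τ, -1, 0, 0, 0]
          + M.mulVec ![1, ρ, ρ ^ 2] 1 • ![0, 0, σ τ, -1, 0])) ∧
      (∃ k : K, k ≠ 0 ∧ (M5.map (algebraMap F K)).mulVec ![1, σ ρ, σ ρ ^ 2, σ ρ ^ 3, 0]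
        = k • (σ (M.mulVec ![1, ρ, ρ ^ 2] 0) • ![τ, -1, 0, 0, 0]
          + σ (M.mulVec ![1, ρ, ρ ^ 2] 1) • ![0, 0, τ, -1, 0])) := by
  have cu : ∀ (x : K) (a b : F), x = algebraMap F K a + algebraMap F K b * τ →
      c0 x = a ∧ c1 x = b := by
    intro x a b h
    rw [hc x] at h
    exact coord_unique τ hτF _ _ _ _ h
  have c00 : c0 0 = 0 ∧ c1 0 = 0 := cu 0 0 0 (by simp)
  have hσc : ∀ x, σ x = algebraMap F K (c0 x) + algebraMap F K (c1 x) * σ τ := by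
    intro x
    conv_lhs => rw [hc x]
    simp
  obtain ⟨S, hS⟩ : ∃ S : F, algebraMap F K S = ρ + σ ρ := by
    refine ⟨2 * c0 ρ + c1 ρ * t1, ?_⟩
    rw [hσc ρ, hσt]
    simp only [map_add, map_mul, map_ofNat]
    linear_combination -hc ρ
  obtain ⟨N, hN⟩ : ∃ N : F, algebraMap F K N = ρ * σ ρ := by
    refine ⟨c0 ρ ^ 2 + c0 ρ * c1 ρ * t1 - c1 ρ ^ 2 * t0, ?_⟩
    have h1 : ρ * σ ρ = (algebraMap F K (c0 ρ) + algebraMap F K (c1 ρ) * τ) *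
        (algebraMap F K (c0 ρ) + algebraMap F K (c1 ρ) * σ τ) := by
      rw [← hσc, ← hc]
    rw [h1, hσt]
    simp only [map_add, map_mul, map_sub, map_pow]
    linear_combination (algebraMap F K (c1 ρ)) ^ 2 * hτ
  have hρ' : ∀ f : F, algebraMap F K f ≠ σ ρ := by
    intro f hf
    exact hρ ⟨S - f, by rw [map_sub, hS, hf]; ring⟩
  have hρρ : ρ - σ ρ ≠ 0 := by
    intro h
    have h1 := hσc ρ
    have h2 := hc ρ
    have h3 : algebraMap F K (c1 ρ) * (τ - σ τ) = 0 := by linear_combination h + h1 - h2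
    rcases mul_eq_zero.1 h3 with h4 | h4
    · apply hρ; refine ⟨c0 ρ, ?_⟩; rw [h4] at h2; simpa using h2.symm
    · exact hστ (by linear_combination -h4)
  have hσσρ : σ (σ ρ) = ρ := by
    have h1 := congrArg σ hS
    simp only [AlgHom.commutes, map_add] at h1
    linear_combination -h1 + hS
  have hττ : τ - σ τ ≠ 0 := sub_ne_zero.2 (Ne.symm hστ)
  let P : Fin 4 → K := cub (σ ρ) (M 0)
  let R : Fin 4 → K := cub (σ ρ) (M 1)
  let Q : Matrix (Fin 5) (Fin 4) F := Matrix.of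
    ![fun j => c0 (P j), fun j => c1 (P j), fun j => c0 (R j), fun j => c1 (R j), ![N, -S, 1, 0]]
  obtain ⟨M5, hM5, hcol⟩ := extend_cols Q (by
    intro u hu
    have e : ∀ i, Q i 0 * u 0 + Q i 1 * u 1 + Q i 2 * u 2 + Q i 3 * u 3 = 0 := by
      intro i
      have := congrFun hu i
      simpa [Matrix.mulVec, dotProduct, Fin.sum_univ_four] using this
    have e' : ∀ i, algebraMap F K (Q i 0) * algebraMap F K (u 0)
        + algebraMap F K (Q i 1) * algebraMap F K (u 1)
        + algebraMap F K (Q i 2) * algebraMap F K (u 2)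
        + algebraMap F K (Q i 3) * algebraMap F K (u 3) = 0 := by
      intro i
      have := congrArg (algebraMap F K) (e i)
      simpa using this
    have f0 := e' 0
    have f1 := e' 1
    have f2 := e' 2
    have f3 := e' 3
    have f4 := e' 4
    simp only [Q, Matrix.of_apply, Matrix.cons_val] at f0 f1 f2 f3 f4
    have gP : P 0 * algebraMap F K (u 0) + P 1 * algebraMap F K (u 1)
        + P 2 * algebraMap F K (u 2) + P 3 * algebraMap F K (u 3) = 0 := by
      rw [hc (P 0), hc (P 1), hc (P 2), hc (P 3)]
      linear_combination f0 + τ * f1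
    have gR : R 0 * algebraMap F K (u 0) + R 1 * algebraMap F K (u 1)
        + R 2 * algebraMap F K (u 2) + R 3 * algebraMap F K (u 3) = 0 := by
      rw [hc (R 0), hc (R 1), hc (R 2), hc (R 3)]
      linear_combination f2 + τ * f3
    simp only [P, R, cub, Matrix.cons_val] at gP gR
    simp only [map_neg, map_one, map_zero, hN, hS] at f4
    have hU : (![algebraMap F K (u 1) - σ ρ * algebraMap F K (u 0),
        algebraMap F K (u 2) - σ ρ * algebraMap F K (u 1),
        algebraMap F K (u 3) - σ ρ * algebraMap F K (u 2)] : Fin 3 → K) = 0 := by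
      apply mulVec_inj M hM
      rw [Matrix.mulVec_zero]
      ext i
      rw [mulVec3]
      fin_cases i
      · simp only [Fin.zero_eta, Pi.zero_apply]; linear_combination gP
      · simp only [Fin.mk_one, Pi.zero_apply]; linear_combination gR
      · simp only [Fin.reduceFinMk, Pi.zero_apply, m0, m1, m2]; linear_combination f4
    have z : ∀ a b : F, algebraMap F K b - σ ρ * algebraMap F K a = 0 → a = 0 := by
      intro a b h
      by_contra ha
      have ha' : algebraMap F K a ≠ 0 := by simpa using ha
      apply hρ' (b / a)
      rw [map_div₀, div_eq_iff ha']
      linear_combination h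
    have u0 := z _ _ (congrFun hU 0)
    have u1 := z _ _ (congrFun hU 1)
    have u2 := z _ _ (congrFun hU 2)
    have h3 := congrFun hU 2
    have u3 : u 3 = 0 := by
      simpa [u2] using h3
    ext i; fin_cases i <;> simp [u0, u1, u2, u3])
  have C0 : ∀ i, M5 i 0 = Q i 0 := fun i => hcol i 0
  have C1 : ∀ i, M5 i 1 = Q i 1 := fun i => hcol i 1
  have C2 : ∀ i, M5 i 2 = Q i 2 := fun i => hcol i 2
  have C3 : ∀ i, M5 i 3 = Q i 3 := fun i => hcol i 3
  -- the cubic identities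
  have idn : ∀ (m : Fin 3 → K) (s : K),
      (algebraMap F K (c0 (cub (σ ρ) m 0)) + algebraMap F K (c0 (cub (σ ρ) m 1)) * s
        + algebraMap F K (c0 (cub (σ ρ) m 2)) * s ^ 2 + algebraMap F K (c0 (cub (σ ρ) m 3)) * s ^ 3)
      + (algebraMap F K (c1 (cub (σ ρ) m 0)) + algebraMap F K (c1 (cub (σ ρ) m 1)) * s
        + algebraMap F K (c1 (cub (σ ρ) m 2)) * s ^ 2
        + algebraMap F K (c1 (cub (σ ρ) m 3)) * s ^ 3) * τ
      = (m 0 + m 1 * s + m 2 * s ^ 2) * (s - σ ρ) := by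
    intro m s
    have h0 := hc (cub (σ ρ) m 0)
    have h1 := hc (cub (σ ρ) m 1)
    have h2 := hc (cub (σ ρ) m 2)
    have h3 := hc (cub (σ ρ) m 3)
    have k : cub (σ ρ) m 0 + cub (σ ρ) m 1 * s + cub (σ ρ) m 2 * s ^ 2 + cub (σ ρ) m 3 * s ^ 3
      = (m 0 + m 1 * s + m 2 * s ^ 2) * (s - σ ρ) := by
      simp only [cub, Matrix.cons_val]; ring
    linear_combination k - h0 - s * h1 - s ^ 2 * h2 - s ^ 3 * h3
  have idn' : ∀ (m : Fin 3 → K) (s : K),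
      (algebraMap F K (c0 (cub (σ ρ) m 0)) + algebraMap F K (c0 (cub (σ ρ) m 1)) * s
        + algebraMap F K (c0 (cub (σ ρ) m 2)) * s ^ 2 + algebraMap F K (c0 (cub (σ ρ) m 3)) * s ^ 3)
      + (algebraMap F K (c1 (cub (σ ρ) m 0)) + algebraMap F K (c1 (cub (σ ρ) m 1)) * s
        + algebraMap F K (c1 (cub (σ ρ) m 2)) * s ^ 2
        + algebraMap F K (c1 (cub (σ ρ) m 3)) * s ^ 3) * σ τ
      = (σ (m 0) + σ (m 1) * s + σ (m 2) * s ^ 2) * (s - ρ) := by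
    intro m s
    have h0 := hσc (cub (σ ρ) m 0)
    have h1 := hσc (cub (σ ρ) m 1)
    have h2 := hσc (cub (σ ρ) m 2)
    have h3 := hσc (cub (σ ρ) m 3)
    have k : σ (cub (σ ρ) m 0) + σ (cub (σ ρ) m 1) * s + σ (cub (σ ρ) m 2) * s ^ 2
        + σ (cub (σ ρ) m 3) * s ^ 3
      = (σ (m 0) + σ (m 1) * s + σ (m 2) * s ^ 2) * (s - ρ) := by
      simp only [cub, Matrix.cons_val, map_neg, map_sub, map_mul, hσσρ]; ring
    linear_combination k - h0 - s * h1 - s ^ 2 * h2 - s ^ 3 * h3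
  refine ⟨M5, hM5, ?_, ?_, ?_, ?_⟩
  · intro θ
    obtain ⟨s, hs⟩ : ∃ s, s = algebraMap F K θ := ⟨_, rfl⟩
    rw [← hs]
    intro h0
    have hsρ : s - ρ ≠ 0 := by
      intro h; exact hρ ⟨θ, by linear_combination h - hs⟩
    have hsρ' : s - σ ρ ≠ 0 := by
      intro h; exact hρ' θ (by linear_combination h - hs)
    obtain ⟨a, ha, hrep⟩ := rep_mk _ h0
    have hn : algebraMap F K (N - S * θ + θ ^ 2) = (s - ρ) * (s - σ ρ) := by
      simp only [map_add, map_sub, map_mul, map_pow, hN, hS, ← hs]; ring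
    have hn0 : N - S * θ + θ ^ 2 ≠ 0 := by
      intro h
      rw [h, map_zero] at hn
      rcases mul_eq_zero.1 hn.symm with h | h
      · exact hsρ h
      · exact hsρ' h
    have hn0' : algebraMap F K (N - S * θ + θ ^ 2) ≠ 0 := (map_ne_zero _).2 hn0
    have quot : ∀ i, (Projectivization.mk K _ h0).rep i / (Projectivization.mk K _ h0).rep 2
        = (M i 0 + M i 1 * s + M i 2 * s ^ 2) / (s - ρ) := by
      intro i
      rw [hrep]
      simp only [Pi.smul_apply, smul_eq_mul, mulVec3, m0, m1, m2]
      rw [mul_div_mul_left _ _ ha]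
      congr 1 <;> ring
    have cc : ∀ i, c0 ((M i 0 + M i 1 * s + M i 2 * s ^ 2) / (s - ρ)) =
        (c0 (cub (σ ρ) (M i) 0) + c0 (cub (σ ρ) (M i) 1) * θ + c0 (cub (σ ρ) (M i) 2) * θ ^ 2
          + c0 (cub (σ ρ) (M i) 3) * θ ^ 3) / (N - S * θ + θ ^ 2) ∧
        c1 ((M i 0 + M i 1 * s + M i 2 * s ^ 2) / (s - ρ)) =
        (c1 (cub (σ ρ) (M i) 0) + c1 (cub (σ ρ) (M i) 1) * θ + c1 (cub (σ ρ) (M i) 2) * θ ^ 2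
          + c1 (cub (σ ρ) (M i) 3) * θ ^ 3) / (N - S * θ + θ ^ 2) := by
      intro i
      apply cu
      have h1 := idn (M i) s
      rw [map_div₀, map_div₀, div_mul_eq_mul_div, ← add_div, div_eq_div_iff hsρ hn0', hn]
      simp only [map_add, map_mul, map_pow, ← hs]
      linear_combination -(s - ρ) * h1
    refine ⟨N - S * θ + θ ^ 2, hn0, ?_⟩
    ext i
    rw [mulVec5, C0, C1, C2, C3]
    simp only [bbVec, quot, (cc 0).1, (cc 0).2, (cc 1).1, (cc 1).2]
    fin_cases i <;> simp [Q, P, R, mul_div_cancel₀, hn0]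
    ring
  · ext i
    rw [mulVec5, C3]
    fin_cases i <;> simp [Q, P, R, cub]
  · refine ⟨-((ρ - σ ρ) / (τ - σ τ)), neg_ne_zero.2 (div_ne_zero hρρ hττ), ?_⟩
    have a0 := idn (M 0) ρ
    have b0 := idn' (M 0) ρ
    have a1 := idn (M 1) ρ
    have b1 := idn' (M 1) ρ
    ext i
    rw [mulVec5]
    simp only [Matrix.map_apply, C0, C1, C2, C3, mulVec3, Pi.smul_apply, Pi.add_apply, smul_eq_mul]
    fin_cases i <;> simp [Q, P, R] <;> field_simp
    · linear_combination τ * b0 - σ τ * a0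
    · linear_combination a0 - b0
    · linear_combination τ * b1 - σ τ * a1
    · linear_combination a1 - b1
    · rw [hN, hS]; ring
  · refine ⟨-((ρ - σ ρ) / (τ - σ τ)), neg_ne_zero.2 (div_ne_zero hρρ hττ), ?_⟩
    have a0 := idn (M 0) (σ ρ)
    have b0 := idn' (M 0) (σ ρ)
    have a1 := idn (M 1) (σ ρ)
    have b1 := idn' (M 1) (σ ρ)
    ext i
    rw [mulVec5]
    simp only [Matrix.map_apply, C0, C1, C2, C3, mulVec3, Pi.smul_apply, Pi.add_apply, smul_eq_mul]
    fin_cases i <;> simp [Q, P, R] <;> field_simp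
    · linear_combination τ * b0 - σ τ * a0
    · linear_combination a0 - b0
    · linear_combination τ * b1 - σ τ * a1
    · linear_combination a1 - b1
    · rw [hN, hS]; ring

lemma exists_ptInf {K : Type} [Field K] (v : Fin 3 → K) (hv : v ≠ 0) (h2 : v 2 = 0) :
    ∃ (t : Option K) (μ : K), μ ≠ 0 ∧ v = μ • ptInfVec t := by
  by_cases h1 : v 1 = 0
  · have h0 : v 0 ≠ 0 := by
      intro h0; apply hv; ext i; fin_cases i <;> simp [h0, h1, h2]
    refine ⟨none, v 0, h0, ?_⟩
    ext i; fin_cases i <;> simp [ptInfVec, h1, h2]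
  · refine ⟨some (v 0 / v 1), v 1, h1, ?_⟩
    ext i; fin_cases i <;> simp [ptInfVec, h2]
    field_simp

lemma spread_mem {F K : Type} [Field F] [Field K] [Algebra F K]
    (τ : K) (t0 t1 : F)
    (hτ : τ ^ 2 = algebraMap F K t1 * τ + algebraMap F K t0)
    (hτF : τ ∉ Set.range (algebraMap F K))
    (c0 c1 : K → F)
    (hc : ∀ x : K, x = algebraMap F K (c0 x) + algebraMap F K (c1 x) * τ)
    (t : Option K) (κ : K) :
    ![c0 (κ * ptInfVec t 0), c1 (κ * ptInfVec t 0), c0 (κ * ptInfVec t 1),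
      c1 (κ * ptInfVec t 1), 0] ∈
      Submodule.span F {spreadV1 c0 c1 t, spreadV2 c0 c1 t0 t1 t} := by
  have cu : ∀ (x : K) (a b : F), x = algebraMap F K a + algebraMap F K b * τ →
      c0 x = a ∧ c1 x = b := by
    intro x a b h
    rw [hc x] at h
    exact coord_unique τ hτF _ _ _ _ h
  have c00 : c0 0 = 0 ∧ c1 0 = 0 := cu 0 0 0 (by simp)
  rw [Submodule.mem_span_pair]
  refine ⟨c0 κ, c1 κ, ?_⟩
  cases t with
  | none =>
    ext i; fin_cases i <;> simp [ptInfVec, spreadV1, spreadV2, c00]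
  | some δ =>
    have h1 := cu (κ * δ) (c0 κ * c0 δ + c1 κ * (t0 * c1 δ))
      (c0 κ * c1 δ + c1 κ * (c0 δ + t1 * c1 δ)) (by
        conv_lhs => rw [hc κ, hc δ]
        simp only [map_add, map_mul]
        linear_combination algebraMap F K (c1 κ) * algebraMap F K (c1 δ) * hτ)
    ext i; fin_cases i <;> simp [ptInfVec, spreadV1, spreadV2, h1.1, h1.2]

/-- An `F_q`-conic `C` through `T̄` in a Baer subplane tangent to `ℓ∞` at `T̄`
corresponds in `PG(4,q)` to a `g`-special twisted cubic: `ℓ∞` is secant to `C⁺`, say at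
`T̄` and `P̄`, and there is a twisted cubic `N` whose affine points are the Bruck-Bose
images of `C \ {T̄}`, which meets `Σ∞` in a single point of the spread line `[T]`, and
whose extension contains the points `P ∈ g` and `P^q ∈ g^q`. -/
theorem statement_16
    {F K : Type} [Field F] [Field K] [Fintype F] [Fintype K] [Algebra F K]
    (q : ℕ) (hq : Fintype.card F = q) (hK : Fintype.card K = q ^ 2)
    (τ : K) (t0 t1 : F)
    (hτ : τ ^ 2 = algebraMap F K t1 * τ + algebraMap F K t0)
    (hτF : τ ∉ Set.range (algebraMap F K))
    (c0 c1 : K → F)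
    (hc : ∀ x : K, x = algebraMap F K (c0 x) + algebraMap F K (c1 x) * τ)
    (hq5 : 5 < q)
    (B : Set (PP K 3)) (hB : IsBaerSubplane F B)
    (tT : Option K) (hT : B ∩ linf K = {ptInf tT})
    (C : Set (PP K 3)) (hC : IsFqConic F C) (hCB : C ⊆ B) (hTC : ptInf tT ∈ C) :
    ∀ D : Set (PP K 3), IsFq2Conic D → C ⊆ D →
      ∃ tP : Option K, ptInf tP ≠ ptInf tT ∧
        D ∩ linf K = {ptInf tT, ptInf tP} ∧
        ∃ M5 : Matrix (Fin 5) (Fin 5) F, IsUnit M5.det ∧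
          mimg M5 (tcVecs (Set.univ : Set F)) \ sinf F
            = bb c0 c1 '' (C \ {ptInf tT}) ∧
          (∃! p : PP F 5, p ∈ mimg M5 (tcVecs (Set.univ : Set F)) ∩ sinf F) ∧
          mimg M5 (tcVecs (Set.univ : Set F)) ∩ sinf F
            ⊆ spreadLine c0 c1 t0 t1 tT ∧
          gpt τ q tP ∈ mimg (M5.map (algebraMap F K)) (tcVecs (Set.univ : Set K)) ∧
          gqpt τ q tP ∈ mimg (M5.map (algebraMap F K)) (tcVecs (Set.univ : Set K)) := by
  intro D hD hCD
  obtain ⟨N2, hN2, rfl⟩ := hD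
  obtain ⟨MB, hMB, rfl⟩ := hB
  obtain ⟨M1, hM1, hC1, κ1, hκ1, hT1⟩ : ∃ M1 : Matrix (Fin 3) (Fin 3) K, IsUnit M1.det ∧
      C = mimg M1 (conicVecs (Set.range (algebraMap F K))) ∧
      ∃ κ : K, κ ≠ 0 ∧ M1.mulVec ![0, 0, 1] = κ • ptInfVec tT := by
    obtain ⟨M0, hM0, rfl⟩ := hC
    obtain ⟨v, hv, h0, h⟩ := hTC
    obtain ⟨c, hc'⟩ := (Projectivization.mk_eq_mk_iff' K _ _ _ _).1 h.symm
    have hc0 : c ≠ 0 := by rintro rfl; rw [zero_smul] at hc'; exact h0 hc'.symm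
    rcases hv with ⟨θ, ⟨t, rfl⟩, rfl⟩ | hv
    · obtain ⟨M', hM', h1, h2⟩ := reparam M0 hM0 t
      exact ⟨M', hM', h1.symm, c, hc0, by rw [h2, hc']⟩
    · rw [Set.mem_singleton_iff] at hv; subst hv
      exact ⟨M0, hM0, rfl, c, hc0, hc'.symm⟩
  have hT2 : ptInfVec tT 2 = 0 := by cases tT <;> simp [ptInfVec]
  have hM122 : M1 2 2 = 0 := by
    have := congrFun hT1 2
    rw [mulVec3] at this
    simpa [hT2] using this
  -- a point of `B` on `ℓ∞` is `T`
  have uniq : ∀ (v : Fin 3 → K) (h0 : M1.mulVec v ≠ 0),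
      Projectivization.mk K _ h0 ∈ mimg MB (subplaneVecs F K) → M1.mulVec v 2 = 0 → v 0 = 0 ∧ v 1 = 0 := by
    intro v h0 h1 h2
    have h3 : Projectivization.mk K _ h0 ∈ mimg MB (subplaneVecs F K) ∩ linf K :=
      ⟨h1, (mk_mem_linf _ _).2 h2⟩
    rw [hT, Set.mem_singleton_iff] at h3
    obtain ⟨c, hc'⟩ := (Projectivization.mk_eq_mk_iff' K _ _ _ _).1 h3
    have h4 : v = (c * κ1⁻¹) • ![0, 0, 1] := by
      apply mulVec_inj M1 hM1
      rw [Matrix.mulVec_smul, hT1, smul_smul, mul_assoc, inv_mul_cancel₀ hκ1, mul_one, hc']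
    rw [h4]; simp
  have hM121 : M1 2 1 ≠ 0 := by
    intro h
    have hne : (![0, 1, 0] : Fin 3 → K) ≠ 0 := by
      intro h'; have := congrFun h' 1; simp at this
    have h0 := mulVec_ne hM1 hne
    have h1 := mid_mem (F := F) (by omega) M1 MB hM1 hMB (by rw [← hC1]; exact hCB) h0
    have h2 := uniq _ h0 h1 (by rw [mulVec3, h]; simp)
    simp at h2
  obtain ⟨ρ, hρd⟩ : ∃ ρ, ρ = -(M1 2 0 / M1 2 1) := ⟨_, rfl⟩
  have hρ : ρ ∉ Set.range (algebraMap F K) := by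
    rintro ⟨t, ht⟩
    have hm : (![1, ρ, ρ ^ 2] : Fin 3 → K) ∈ conicVecs (Set.range (algebraMap F K)) :=
      Or.inl ⟨ρ, ⟨t, ht⟩, rfl⟩
    have h0 := mulVec_ne hM1 (conic_ne hm)
    have h2 := uniq _ h0 (hCB (by rw [hC1]; exact ⟨_, hm, h0, rfl⟩))
      (by rw [mulVec3, hM122, hρd]; field_simp; ring)
    simp at h2
  have hbi : (M1 2 1)⁻¹ ≠ 0 := inv_ne_zero hM121
  obtain ⟨M, hMd⟩ : ∃ M, M = (M1 2 1)⁻¹ • M1 := ⟨_, rfl⟩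
  have hM : IsUnit M.det := by
    rw [hMd, Matrix.det_smul]
    exact ((isUnit_iff_ne_zero.2 hbi).pow _).mul hM1
  have hCM : C = mimg M (conicVecs (Set.range (algebraMap F K))) := by
    rw [hC1, hMd, mimg_smul _ _ _ hbi]
  have m0 : M 2 0 = -ρ := by rw [hMd, hρd]; simp; field_simp
  have m1 : M 2 1 = 1 := by rw [hMd]; simp [hM121]
  have m2 : M 2 2 = 0 := by rw [hMd]; simp [hM122]
  obtain ⟨κ, hκ, hTM⟩ : ∃ κ : K, κ ≠ 0 ∧ M.mulVec ![0, 0, 1] = κ • ptInfVec tT :=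
    ⟨(M1 2 1)⁻¹ * κ1, mul_ne_zero hbi hκ1, by rw [hMd, Matrix.smul_mulVec, hT1, smul_smul]⟩
  have hDM := conic_unique (F := F) (by omega) M N2 hM hN2 (by rw [← hCM]; exact hCD)
  rw [hDM]
  have hPm : (![1, ρ, ρ ^ 2] : Fin 3 → K) ∈ conicVecs (Set.univ : Set K) :=
    Or.inl ⟨ρ, trivial, rfl⟩
  have hTm : (![0, 0, 1] : Fin 3 → K) ∈ conicVecs (Set.univ : Set K) := Or.inr rfl
  have hP0 := mulVec_ne hM (conic_ne hPm)
  have hP2 : M.mulVec ![1, ρ, ρ ^ 2] 2 = 0 := by rw [mulVec3, m0, m1, m2]; ring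
  obtain ⟨tP, μ, hμ, hPM⟩ := exists_ptInf _ hP0 hP2
  have eT : ∀ h, Projectivization.mk K (M.mulVec ![0, 0, 1]) h = ptInf tT :=
    fun h => mk_eq _ _ κ hTM.symm
  have eP : ∀ h, Projectivization.mk K (M.mulVec ![1, ρ, ρ ^ 2]) h = ptInf tP :=
    fun h => mk_eq _ _ μ hPM.symm
  have hPT : ptInf tP ≠ ptInf tT := by
    rw [← eP hP0, ← eT (mulVec_ne hM (conic_ne hTm))]
    intro h
    obtain ⟨c, hc'⟩ := (Projectivization.mk_eq_mk_iff' K _ _ _ _).1 h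
    rw [← Matrix.mulVec_smul] at hc'
    have := congrFun (mulVec_inj M hM hc') 0
    simp at this
  have aff : ∀ θ : K, M.mulVec ![1, θ, θ ^ 2] 2 = θ - ρ := by
    intro θ; rw [mulVec3, m0, m1, m2]; ring
  refine ⟨tP, hPT, ?_, ?_⟩
  · ext p
    simp only [Set.mem_inter_iff, Set.mem_insert_iff, Set.mem_singleton_iff]
    constructor
    · rintro ⟨⟨v, hv, h0, rfl⟩, hl⟩
      rw [mk_mem_linf] at hl
      rcases hv with ⟨θ, -, rfl⟩ | hv
      · right
        rw [aff, sub_eq_zero] at hl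
        subst hl
        exact eP _
      · rw [Set.mem_singleton_iff] at hv; subst hv
        left; exact eT _
    · rintro (rfl | rfl)
      · have h0 := mulVec_ne hM (conic_ne hTm)
        rw [← eT h0]
        exact ⟨⟨_, hTm, h0, rfl⟩, (mk_mem_linf _ _).2 (by rw [mulVec3, m2]; ring)⟩
      · rw [← eP hP0]
        exact ⟨⟨_, hPm, hP0, rfl⟩, (mk_mem_linf _ _).2 hP2⟩
  obtain ⟨σ, hσ, hσt, hστ⟩ := frob_facts q hq hK τ t0 t1 hτ c0 c1 hc hq5
  obtain ⟨M5, hM5, haff, hinf, ⟨k, hk, hgk⟩, ⟨k', hk', hgk'⟩⟩ :=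
    core τ hτF c0 c1 hc σ t1 hσt hστ t0 hτ M hM ρ hρ m0 m1 m2
  have hM5K : IsUnit (M5.map (algebraMap F K)).det := by
    have := hM5.map (algebraMap F K)
    rwa [RingHom.map_det] at this
  have hcF : ∀ θ : F, (![1, algebraMap F K θ, algebraMap F K θ ^ 2] : Fin 3 → K) ∈
      conicVecs (Set.range (algebraMap F K)) := fun θ => Or.inl ⟨_, ⟨θ, rfl⟩, rfl⟩
  have hz : ∀ p, bbVec c0 c1 p 4 = 1 := fun p => by simp [bbVec]
  have haff4 : ∀ θ : F, M5.mulVec ![1, θ, θ ^ 2, θ ^ 3, 0] 4 ≠ 0 := by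
    intro θ
    obtain ⟨n, hn, h⟩ := haff θ (mulVec_ne hM (conic_ne (hcF θ)))
    rw [h, Pi.smul_apply, hz]; simpa using hn
  have hv5 : (![0, 0, 0, 1, 0] : Fin 5 → F) ≠ 0 := by
    intro h; have := congrFun h 3; simp at this
  have h05 := mulVec_ne hM5 hv5
  have hinf4 : M5.mulVec ![0, 0, 0, 1, 0] 4 = 0 := by rw [hinf]; simp
  have hS : mimg M5 (tcVecs (Set.univ : Set F)) ∩ sinf F = {Projectivization.mk F _ h05} := by
    ext p
    simp only [Set.mem_inter_iff, Set.mem_singleton_iff]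
    constructor
    · rintro ⟨⟨v, hv, h0, rfl⟩, hl⟩
      rw [mk_mem_sinf] at hl
      rcases hv with ⟨θ, -, rfl⟩ | hv
      · exact absurd hl (haff4 θ)
      · rw [Set.mem_singleton_iff] at hv; subst hv; rfl
    · rintro rfl
      exact ⟨⟨_, Or.inr rfl, h05, rfl⟩, (mk_mem_sinf _ _).2 hinf4⟩
  refine ⟨M5, hM5, ?_, ?_, ?_, ?_, ?_⟩
  · ext p
    constructor
    · rintro ⟨⟨v, hv, h0, rfl⟩, hl⟩
      rw [mk_mem_sinf] at hl
      rcases hv with ⟨θ, -, rfl⟩ | hv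
      · have h1 := mulVec_ne hM (conic_ne (hcF θ))
        obtain ⟨n, hn, h⟩ := haff θ h1
        refine ⟨Projectivization.mk K _ h1, ⟨by rw [hCM]; exact ⟨_, hcF θ, h1, rfl⟩, ?_⟩, ?_⟩
        · intro h2
          rw [Set.mem_singleton_iff] at h2
          have h3 : Projectivization.mk K _ h1 ∈ linf K := by
            rw [h2, ptInf, mk_mem_linf]; exact hT2
          rw [mk_mem_linf, aff, sub_eq_zero] at h3
          exact hρ ⟨θ, h3⟩
        · exact (mk_eq _ _ n h.symm).symm
      · rw [Set.mem_singleton_iff] at hv; subst hv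
        exact absurd hinf4 hl
    · rintro ⟨x, ⟨hx, hxT⟩, rfl⟩
      rw [hCM] at hx
      obtain ⟨v, hv, h0, rfl⟩ := hx
      rcases hv with ⟨_, ⟨θ, rfl⟩, rfl⟩ | hv
      · obtain ⟨n, hn, h⟩ := haff θ h0
        refine ⟨mk_mem_mimg M5 hM5 _ _ _ _ (Or.inl ⟨θ, trivial, rfl⟩) n hn h, ?_⟩
        rw [bb, mk_mem_sinf, hz]
        exact one_ne_zero
      · rw [Set.mem_singleton_iff] at hv; subst hv
        exact absurd (eT h0) hxT
  · rw [hS]; exact ⟨_, rfl, fun y hy => hy⟩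
  · rw [hS, Set.singleton_subset_iff]
    apply mk_mem_ptsOf
    rw [hinf]
    have hx : M 0 2 = κ * ptInfVec tT 0 := by
      have := congrFun hTM 0; rw [mulVec3] at this; simpa using this
    have hy : M 1 2 = κ * ptInfVec tT 1 := by
      have := congrFun hTM 1; rw [mulVec3] at this; simpa using this
    rw [hx, hy]
    exact spread_mem τ t0 t1 hτ hτF c0 c1 hc tT κ
  · refine mk_mem_mimg _ hM5K _ _ _ _ (Or.inl ⟨ρ, trivial, rfl⟩) (k * μ) (mul_ne_zero hk hμ) ?_
    rw [hgk, hPM, mul_smul]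
    congr 1
    rw [hσ]
    cases tP with
    | none => simp [ptInfVec, gptVec, A0v]
    | some δ => simp [ptInfVec, gptVec, A0v, A1v, mul_assoc]
  · refine mk_mem_mimg _ hM5K _ _ _ _ (Or.inl ⟨σ ρ, trivial, rfl⟩) (k' * σ μ)
      (mul_ne_zero hk' (by simpa using hμ)) ?_
    rw [hgk', hPM, mul_smul]
    congr 1
    cases tP with
    | none => simp [ptInfVec, gqptVec, B0v]
    | some δ => simp [ptInfVec, gqptVec, B0v, B1v, hσ, mul_assoc, mul_pow]

end BaerConics
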